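/- Let 𝒳, 𝒴, 𝒵 be finite types with |𝒳| = |𝒵| = K, P_{Y|X} column-stochastic, P_{Z|X} invertible column-stochastic, P_X a positive probability vector with P_Y = P_{Y|X} ⬝ P_X and P_Z = P_{Z|X} ⬝ P_X positive. Let 𝒰 be finite, P_U a probability vector on 𝒰, and J : 𝒰 → ℝ^𝒵 with ∑_z J_u(z) = 0 for all u, ∑_u P_U(u) • J_u = 0, and ∑_z J_u(z)²/P_Z(z) ≤ 1 for all u. For ε ∈ ℝ define I(ε) = ∑_u P_U(u) · ∑_y (P_Y(y) + ε·(P_{Y|X} ⬝ P_{Z|X}⁻¹ ⬝ J_u)(y)) · log(1 + ε·(P_{Y|X} ⬝ P_{Z|X}⁻¹ ⬝ J_u)(y)/P_Y(y)). Then ε ↦ I(ε) − (ε²/2) · ∑_u P_U(u) · ‖[√P_Y⁻¹] ⬝ P_{Y|X} ⬝ P_{Z|X}⁻¹ ⬝ [√P_Z] ⬝ L_u‖² is o(ε²) as ε → 0, where L_u = [√P_Z⁻¹] ⬝ J_u. -/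

import Mathlib

open Matrix Filter Asymptotics

/-- Euclidean norm of a real vector on a finite index type. -/
noncomputable def euclNorm {I : Type*} [Fintype I] (v : I → ℝ) : ℝ :=
  Real.sqrt (∑ i, v i ^ 2)

/-- A matrix is column-stochastic if its entries are nonnegative and each column sums to 1. -/
def ColStochastic {I J : Type*} [Fintype I] (M : Matrix I J ℝ) : Prop :=
  (∀ i j, 0 ≤ M i j) ∧ ∀ j, ∑ i, M i j = 1

theorem aux_scalar : (fun t : ℝ => (1 + t) * Real.log (1 + t) - t - t ^ 2 / 2)
    =o[nhds 0] (fun t => t ^ 2) := by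
  have h3 : (fun t : ℝ => t ^ 3) =o[nhds 0] (fun t : ℝ => t ^ 2) :=
    isLittleO_pow_pow (by norm_num)
  refine IsBigO.trans_isLittleO ?_ h3
  refine IsBigO.of_bound 4 ?_
  filter_upwards [Metric.ball_mem_nhds (0 : ℝ) (show (0:ℝ) < 1/2 by norm_num)] with t ht
  have ht' : |t| < 1/2 := by simpa using ht
  have h := Real.abs_log_sub_add_sum_range_le (x := -t) (by rw [abs_neg]; linarith) 2
  simp only [Finset.sum_range_succ, Finset.sum_range_zero, abs_neg, sub_neg_eq_add] at h
  norm_num at h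
  have h4 : |t| ^ 3 / (1 - |t|) ≤ 2 * |t| ^ 3 := by
    rw [div_le_iff₀ (by linarith)]
    have : 0 ≤ |t| ^ 3 := by positivity
    nlinarith
  have h5 := h.trans h4
  rw [Real.norm_eq_abs, Real.norm_eq_abs, abs_pow]
  have e : (1 + t) * Real.log (1 + t) - t - t ^ 2 / 2 =
      (1 + t) * (-t + t ^ 2 / 2 + Real.log (1 + t)) - t ^ 3 / 2 := by ring
  rw [e]
  refine (abs_sub _ _).trans ?_
  rw [abs_mul, abs_div, abs_pow]
  have h6 : |1 + t| ≤ 3 / 2 := by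
    rw [abs_le]; rw [abs_lt] at ht'; constructor <;> linarith
  have h7 := mul_le_mul h6 h5 (abs_nonneg _) (by norm_num)
  have : 0 ≤ |t| ^ 3 := by positivity
  norm_num
  linarith

theorem aux_term (p a : ℝ) (hp : 0 < p) :
    (fun ε : ℝ => (p + ε * a) * Real.log (1 + ε * a / p) - ε * a - ε ^ 2 / 2 * (a ^ 2 / p))
    =o[nhds 0] (fun ε => ε ^ 2) := by
  have hT : Tendsto (fun ε : ℝ => ε * a / p) (nhds 0) (nhds 0) := by
    have : Continuous (fun ε : ℝ => ε * a / p) := by fun_prop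
    simpa using this.tendsto 0
  have h := (aux_scalar.comp_tendsto hT).const_mul_left p
  have hO : ((fun t : ℝ => t ^ 2) ∘ fun ε : ℝ => ε * a / p) =O[nhds 0] (fun ε : ℝ => ε ^ 2) := by
    have : ((fun t : ℝ => t ^ 2) ∘ fun ε : ℝ => ε * a / p) =
        fun ε : ℝ => (a / p) ^ 2 * ε ^ 2 := by
      funext ε; simp only [Function.comp]; ring
    rw [this]
    exact isBigO_const_mul_self _ _ _
  refine (h.trans_isBigO hO).congr_left ?_
  intro ε
  simp only [Function.comp]
  have h1 : p + ε * a = p * (1 + ε * a / p) := by field_simp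
  rw [h1]
  field_simp

theorem stmt_17 {𝒳 𝒴 𝒵 𝒰 : Type*} [Fintype 𝒳] [Fintype 𝒴] [Fintype 𝒵] [Fintype 𝒰]
    [DecidableEq 𝒳] [DecidableEq 𝒴] [DecidableEq 𝒵]
    (hcard : Fintype.card 𝒳 = Fintype.card 𝒵)
    (PYX : Matrix 𝒴 𝒳 ℝ) (hPYX : ColStochastic PYX)
    (PZX : Matrix 𝒵 𝒳 ℝ) (hPZX : ColStochastic PZX)
    (PZXinv : Matrix 𝒳 𝒵 ℝ) (hinv1 : PZX * PZXinv = 1) (hinv2 : PZXinv * PZX = 1)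
    (PX : 𝒳 → ℝ) (hPXpos : ∀ x, 0 < PX x) (hPXsum : ∑ x, PX x = 1)
    (PY : 𝒴 → ℝ) (hPY : PY = PYX.mulVec PX) (hPYpos : ∀ y, 0 < PY y)
    (PZ : 𝒵 → ℝ) (hPZ : PZ = PZX.mulVec PX) (hPZpos : ∀ z, 0 < PZ z)
    (PU : 𝒰 → ℝ) (hPUnn : ∀ u, 0 ≤ PU u) (hPUsum : ∑ u, PU u = 1)
    (J : 𝒰 → 𝒵 → ℝ)
    (hJ1 : ∀ u, ∑ z, J u z = 0)
    (hJ2 : ∑ u, PU u • J u = 0)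
    (hJ3 : ∀ u, ∑ z, J u z ^ 2 / PZ z ≤ 1)
    (I : ℝ → ℝ)
    (hI : ∀ ε, I ε =
      ∑ u, PU u * ∑ y, (PY y + ε * (PYX * PZXinv).mulVec (J u) y) *
        Real.log (1 + ε * (PYX * PZXinv).mulVec (J u) y / PY y))
    (L : 𝒰 → 𝒵 → ℝ)
    (hL : ∀ u, L u = (diagonal fun z => (Real.sqrt (PZ z))⁻¹).mulVec (J u)) :
    (fun ε => I ε - ε ^ 2 / 2 * ∑ u, PU u *
        euclNorm ((diagonal (fun y => (Real.sqrt (PY y))⁻¹) * PYX * PZXinv *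
          diagonal (fun z => Real.sqrt (PZ z))).mulVec (L u)) ^ 2)
      =o[nhds 0] (fun ε => ε ^ 2) := by
  set M := PYX * PZXinv with hM
  have hvec : ∀ u, (diagonal (fun y => (Real.sqrt (PY y))⁻¹) * PYX * PZXinv *
          diagonal (fun z => Real.sqrt (PZ z))).mulVec (L u) =
      fun y => (Real.sqrt (PY y))⁻¹ * M.mulVec (J u) y := by
    intro u
    have hd : (diagonal (fun z => Real.sqrt (PZ z))).mulVec (L u) = J u := by
      rw [hL]
      funext z
      rw [mulVec_diagonal, mulVec_diagonal, mul_inv_cancel_left₀]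
      exact (Real.sqrt_pos.2 (hPZpos z)).ne'
    rw [← mulVec_mulVec, hd, Matrix.mul_assoc, ← hM, ← mulVec_mulVec]
    funext y
    rw [mulVec_diagonal]
  have hnorm : ∀ u, euclNorm ((diagonal (fun y => (Real.sqrt (PY y))⁻¹) * PYX * PZXinv *
          diagonal (fun z => Real.sqrt (PZ z))).mulVec (L u)) ^ 2 =
      ∑ y, M.mulVec (J u) y ^ 2 / PY y := by
    intro u
    rw [hvec, euclNorm, Real.sq_sqrt (Finset.sum_nonneg fun _ _ => sq_nonneg _)]
    refine Finset.sum_congr rfl fun y _ => ?_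
    rw [mul_pow, inv_pow, Real.sq_sqrt (hPYpos y).le]
    ring
  have hzero : ∀ y, ∑ u, PU u * M.mulVec (J u) y = 0 := by
    intro y
    have h := congrFun (congrArg M.mulVec hJ2) y
    rw [mulVec_zero, mulVec_sum, Finset.sum_apply] at h
    simpa [mulVec_smul] using h
  have hmain : (fun ε : ℝ => ∑ u, PU u * ∑ y, ((PY y + ε * M.mulVec (J u) y) *
        Real.log (1 + ε * M.mulVec (J u) y / PY y) - ε * M.mulVec (J u) y
          - ε ^ 2 / 2 * (M.mulVec (J u) y ^ 2 / PY y))) =o[nhds 0] (fun ε => ε ^ 2) :=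
    IsLittleO.fun_sum fun u _ => (IsLittleO.fun_sum fun y _ =>
      aux_term (PY y) _ (hPYpos y)).const_mul_left (PU u)
  refine hmain.congr_left ?_
  intro ε
  rw [hI]
  simp only [hnorm, Finset.sum_sub_distrib, mul_sub, ← Finset.mul_sum]
  have e1 : ∑ u, PU u * (ε * ∑ y, M.mulVec (J u) y) = 0 := by
    simp only [Finset.mul_sum]
    rw [Finset.sum_comm]
    refine Finset.sum_eq_zero fun y _ => ?_
    rw [← mul_zero ε, ← hzero y, Finset.mul_sum]
    exact Finset.sum_congr rfl fun u _ => by ring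
  rw [e1, sub_zero, Finset.mul_sum]
  congr 1
  exact Finset.sum_congr rfl fun u _ => by ring
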